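/- In every C_k-algebra (A, t), for all a, b ∈ A one has (a ⇁ b) ⇁ a = a; consequently ((a ⇁ b) ⇁ a) ⇁ a = 1. -/

import Mathlib

universe u

/-- Modal pseudocomplemented De Morgan algebra (mpM-algebra). -/
class MpM (A : Type u) extends DistribLattice A, BoundedOrder A where
  dm : A → A   -- De Morgan negation ∼
  ps : A → A   -- pseudocomplement *
  dm_dm : ∀ x : A, dm (dm x) = x
  dm_sup : ∀ x y : A, dm (x ⊔ y) = dm x ⊓ dm y
  pseudo : ∀ a x : A, a ⊓ x = ⊥ ↔ x ≤ ps a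
  modal : ∀ x : A, x ⊔ dm x ≤ x ⊔ ps x

open MpM

variable {A : Type u} [MpM A]

/-- ∇x = ∼(∼x ∧ x*) -/
def nabla (x : A) : A := dm (dm x ⊓ ps x)

/-- △x = ∼∇∼x -/
def tri (x : A) : A := dm (nabla (dm x))

/-- A C_k-algebra structure on an mpM-algebra `A`: an automorphism `t` with `t^k = id`. -/
structure CkStr (A : Type u) [MpM A] (k : ℕ) where
  t : A → A
  bij : Function.Bijective t
  map_inf : ∀ x y : A, t (x ⊓ y) = t x ⊓ t y
  map_sup : ∀ x y : A, t (x ⊔ y) = t x ⊔ t y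
  map_dm : ∀ x : A, t (dm x) = dm (t x)
  map_ps : ∀ x : A, t (ps x) = ps (t x)
  map_bot : t (⊥ : A) = ⊥
  map_top : t (⊤ : A) = ⊤
  periodic : ∀ x : A, t^[k] x = x

/-- Lattice filter: nonempty, upward closed, closed under binary meets. -/
def IsLatFilter (F : Set A) : Prop :=
  F.Nonempty ∧ (∀ x ∈ F, ∀ y : A, x ≤ y → y ∈ F) ∧ ∀ x ∈ F, ∀ y ∈ F, x ⊓ y ∈ F

/-- c-filter: a filter closed under △ and t. -/
def IsCFilter {k : ℕ} (T : CkStr A k) (F : Set A) : Prop :=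
  IsLatFilter F ∧ ∀ x ∈ F, tri x ∈ F ∧ T.t x ∈ F

/-- maximal c-filter: proper and not properly contained in a proper c-filter. -/
def IsMaxCFilter {k : ℕ} (T : CkStr A k) (N : Set A) : Prop :=
  IsCFilter T N ∧ N ≠ Set.univ ∧
    ∀ G : Set A, IsCFilter T G → G ≠ Set.univ → N ⊆ G → N = G

/-- prime filter -/
def IsPrimeFilter (P : Set A) : Prop :=
  IsLatFilter P ∧ P ≠ Set.univ ∧ ∀ x y : A, x ⊔ y ∈ P → x ∈ P ∨ y ∈ P

/-- ultrafilter: maximal proper (lattice) filter -/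
def IsUltraFilter (U : Set A) : Prop :=
  IsLatFilter U ∧ U ≠ Set.univ ∧
    ∀ G : Set A, IsLatFilter G → G ≠ Set.univ → U ⊆ G → U = G

/-- Birula–Rasiowa transformation φ(P) = A \ {∼x : x ∈ P}. -/
def brPhi (P : Set A) : Set A := Set.univ \ (dm '' P)

/-- a ⇁ b = (⋁_{i=1}^{k} ∇(∼ t^i(a))) ∨ b -/
def rimp {k : ℕ} (T : CkStr A k) (a b : A) : A :=
  ((Finset.Icc 1 k).sup fun i => nabla (dm (T.t^[i] a))) ⊔ b

/-- cyclic deductive system -/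
def IsCDS {k : ℕ} (T : CkStr A k) (D : Set A) : Prop :=
  (⊤ : A) ∈ D ∧ ∀ x ∈ D, ∀ y : A, rimp T x y ∈ D → y ∈ D

/-- maximal cyclic deductive system -/
def IsMaxCDS {k : ℕ} (T : CkStr A k) (M : Set A) : Prop :=
  IsCDS T M ∧ M ≠ Set.univ ∧
    ∀ G : Set A, IsCDS T G → G ≠ Set.univ → M ⊆ G → M = G

/-- the smallest cyclic deductive system containing `X` -/
def genCDS {k : ℕ} (T : CkStr A k) (X : Set A) : Set A :=
  ⋂₀ {D : Set A | IsCDS T D ∧ X ⊆ D}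

/-- K(A) = {x : t(x) = x and ∇x = x} -/
def Kset {k : ℕ} (T : CkStr A k) : Set A := {x : A | T.t x = x ∧ nabla x = x}

/-- consistency operator ∘x = ⋀_{i=0}^{k} t^i((∼x ∨ x) ∧ (x ∧ ∼x)*) -/
def cCirc {k : ℕ} (T : CkStr A k) (x : A) : A :=
  (Finset.Icc 0 k).inf fun i => T.t^[i] ((dm x ⊔ x) ⊓ ps (x ⊓ dm x))

/-- x → y = ∼((∼(x∨y))* ∧ (x∨y)) ∨ ((∼(x∧y))* ∧ (x∧y)) -/
def mpTo (x y : A) : A :=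
  dm (ps (dm (x ⊔ y)) ⊓ (x ⊔ y)) ⊔ (ps (dm (x ⊓ y)) ⊓ (x ⊓ y))

/-- x ⇒ y = (x → y) ∧ (∼y → ∼x) -/
def mpIff (x y : A) : A := mpTo x y ⊓ mpTo (dm y) (dm x)

theorem aux_dm_anti {x y : A} (h : x ≤ y) : dm y ≤ dm x := by
  have := dm_sup x y
  rw [sup_eq_right.2 h] at this
  rw [this]; exact inf_le_left

theorem aux_dm_le {x y : A} (h : dm x ≤ y) : dm y ≤ x := by
  have := aux_dm_anti h
  rwa [dm_dm] at this

theorem aux_inf_ps (x : A) : x ⊓ ps x = ⊥ := (pseudo x (ps x)).2 le_rfl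

theorem aux_ps_anti {x y : A} (h : x ≤ y) : ps y ≤ ps x := by
  rw [← pseudo]
  exact le_bot_iff.1 ((inf_le_inf_right _ h).trans (aux_inf_ps y).le)

theorem aux_nabla_mono {x y : A} (h : x ≤ y) : nabla x ≤ nabla y :=
  aux_dm_anti (inf_le_inf (aux_dm_anti h) (aux_ps_anti h))

theorem aux_dm_bot : dm (⊥ : A) = ⊤ :=
  top_le_iff.1 (by
    have := aux_dm_anti (bot_le : (⊥ : A) ≤ dm ⊤)
    rwa [dm_dm] at this)

theorem aux_nabla_tri (a : A) : nabla (dm (nabla (dm a))) ≤ a := by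
  have e : dm (nabla (dm a)) = a ⊓ ps (dm a) := by simp [nabla, dm_dm]
  rw [e]
  apply aux_dm_le
  refine le_inf (aux_dm_anti inf_le_left) ?_
  rw [← pseudo, inf_assoc, inf_comm (ps _), aux_inf_ps, inf_bot_eq]

theorem aux_nabla_sup (a : A) : nabla (dm a) ⊔ a = ⊤ := by
  have h : dm (nabla (dm a) ⊔ a) = ⊥ := by
    rw [dm_sup, nabla, dm_dm, dm_dm, inf_assoc, inf_comm (ps _), aux_inf_ps, inf_bot_eq]
  rw [← dm_dm (nabla (dm a) ⊔ a), h, aux_dm_bot]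

theorem aux_t_mono {k : ℕ} (T : CkStr A k) : Monotone T.t := by
  intro x y h
  have := T.map_sup x y
  rw [sup_eq_right.2 h] at this
  rw [this]; exact le_sup_left

theorem aux_t_nabla {k : ℕ} (T : CkStr A k) (j : ℕ) (x : A) :
    T.t^[j] (nabla (dm x)) = nabla (dm (T.t^[j] x)) := by
  induction j with
  | zero => rfl
  | succ n ih =>
    rw [Function.iterate_succ_apply', Function.iterate_succ_apply', ih]
    simp [nabla, T.map_dm, T.map_inf, T.map_ps]

theorem aux_first {k : ℕ} (hk : 0 < k) (T : CkStr A k) (a b : A) :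
    rimp T (rimp T a b) a = a := by
  refine sup_eq_right.2 (Finset.sup_le fun j hj => ?_)
  obtain ⟨hj1, hj2⟩ := Finset.mem_Icc.1 hj
  obtain ⟨i, hi, hij⟩ : ∃ i ∈ Finset.Icc 1 k, T.t^[j] (T.t^[i] a) = a := by
    rcases hj2.lt_or_eq with h | h
    · refine ⟨k - j, Finset.mem_Icc.2 (by omega), ?_⟩
      rw [← Function.iterate_add_apply, Nat.add_sub_cancel' hj2, T.periodic]
    · exact ⟨k, Finset.mem_Icc.2 (by omega), by rw [h, T.periodic, T.periodic]⟩
  have h1 : nabla (dm (T.t^[i] a)) ≤ rimp T a b :=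
    le_sup_of_le_left
      (Finset.le_sup (f := fun i => nabla (dm (T.t^[i] a))) hi)
  have h2 := (aux_t_mono T).iterate j h1
  rw [aux_t_nabla, hij] at h2
  exact (aux_nabla_mono (aux_dm_anti h2)).trans (aux_nabla_tri a)

theorem stmt6 {k : ℕ} (hk : 0 < k) (T : CkStr A k) (a b : A) :
    rimp T (rimp T a b) a = a ∧ rimp T (rimp T (rimp T a b) a) a = ⊤ := by
  refine ⟨aux_first hk T a b, ?_⟩
  rw [aux_first hk T a b, ← top_le_iff, ← aux_nabla_sup a]
  refine sup_le_sup_right ?_ a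
  have := Finset.le_sup (f := fun i => nabla (dm (T.t^[i] a)))
    (Finset.mem_Icc.2 ⟨hk, le_rfl⟩ : k ∈ Finset.Icc 1 k)
  simpa only [T.periodic] using this
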